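/- arXiv:2309.11121 — 2 statements merged into one kernel-verified Lean document; each statement's English description precedes it below -/
import Mathlib

section
/- Let F be an algebraically closed field and n a natural number. If p is a multivariate polynomial in n variables over F (p ∈ F[x₁,…,xₙ]) whose evaluation is nonzero at every point of Fⁿ, then p is a constant polynomial (its total degree is 0). Equivalently, every multivariate polynomial over F of positive total degree has a zero in Fⁿ. -/
/-- Over an algebraically closed field, a multivariate polynomial whose evaluation is
nonzero at every point is a constant polynomial (its total degree is `0`); equivalently,
every multivariate polynomial of positive total degree has a zero. -/
theorem stmt_9 (F : Type*) [Field F] [IsAlgClosed F] (n : ℕ)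
    (p : MvPolynomial (Fin n) F)
    (h : ∀ x : Fin n → F, MvPolynomial.eval x p ≠ 0) :
    p.totalDegree = 0 := by
  -- By the weak Nullstellensatz, the ideal `(p)` has empty zero locus, so it is the unit ideal.
  have hZ : MvPolynomial.zeroLocus F (Ideal.span {p}) = ∅ := by
    rw [Set.eq_empty_iff_forall_notMem]
    intro x hx
    have := MvPolynomial.mem_zeroLocus_iff.mp hx p (Ideal.mem_span_singleton_self p)
    exact h x (by simpa [MvPolynomial.coe_aeval_eq_eval] using this)
  have hr := MvPolynomial.vanishingIdeal_zeroLocus_eq_radical (K := F) (Ideal.span {p})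
  rw [hZ, MvPolynomial.vanishingIdeal_empty, eq_comm, Ideal.radical_eq_top,
    Ideal.span_singleton_eq_top] at hr
  exact (MvPolynomial.isUnit_iff_totalDegree_of_isReduced.mp hr).2
end

section
/- Let F be an algebraically closed field, let m ≥ 1, and let N, D ∈ F[x₁,…,x_m] be homogeneous polynomials of the same degree d such that D(x) = 0 if and only if x = 0 (for x ∈ F^m). Then the function [x] ↦ N(x)/D(x) is constant on projective space: for all nonzero x, y ∈ F^m, N(x)·D(y) = N(y)·D(x). -/
/-!
Proportional points are handled by homogeneity. The point is that non-proportional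
nonzero `x, y` do not exist: `m ≥ 2` is incompatible with the hypothesis on `D`. The univariate
polynomials `D(x + T y)` and `D(y + T x)` have no root, so over an algebraically closed field
they are constant, equal to `D(x)` and `D(y)`. Homogeneity gives `D(y + t x) = t ^ d D(x + t⁻¹ y)`,
hence `D(y) = t ^ d D(x)` for all `t ≠ 0`. Since `d > 0` (as `D(0) = 0 ≠ D(x)`), `t ^ d` takes
every nonzero value, a contradiction.
-/

/-- A polynomial with no zero on the affine line `x + F y` is constant on that line, since its
restriction is a univariate polynomial without roots. -/
lemma eval_line_const {F : Type*} [Field F] [IsAlgClosed F] {m : ℕ}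
    (D : MvPolynomial (Fin m) F) (x y : Fin m → F)
    (h : ∀ t : F, MvPolynomial.eval (x + t • y) D ≠ 0) (t : F) :
    MvPolynomial.eval (x + t • y) D = MvPolynomial.eval x D := by
  let p : Polynomial F :=
    MvPolynomial.aeval (fun i => Polynomial.C (x i) + Polynomial.X * Polynomial.C (y i)) D
  have hp (s : F) : p.eval s = MvPolynomial.eval (x + s • y) D := by
    simp only [p]
    rw [← Polynomial.coe_aeval_eq_eval, ← AlgHom.comp_apply,
      MvPolynomial.comp_aeval, ← MvPolynomial.coe_aeval_eq_eval, RingHom.coe_coe]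
    congr 2
    ext i
    simp
    exact mul_comm _ _
  have hdeg : p.degree = 0 := by
    by_contra hne
    obtain ⟨s, hs⟩ := IsAlgClosed.exists_root p hne
    exact h s (by rw [← hp]; exact hs)
  have h0 := hp 0
  rw [zero_smul, add_zero] at h0
  rw [← hp, ← h0, Polynomial.eq_C_of_degree_eq_zero hdeg]
  simp

lemma eval_smul_form {F : Type*} [Field F] {m d : ℕ} {P : MvPolynomial (Fin m) F}
    (hP : P.IsHomogeneous d) (c : F) (x : Fin m → F) :
    MvPolynomial.eval (c • x) P = c ^ d * MvPolynomial.eval x P := by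
  rw [MvPolynomial.eval_eq, MvPolynomial.eval_eq, Finset.mul_sum]
  refine Finset.sum_congr rfl fun s hs => ?_
  have hd : ∑ i ∈ s.support, s i = d := by
    have := hP (MvPolynomial.mem_support_iff.mp hs)
    rwa [Pi.one_def, ← Finsupp.degree_eq_weight_one] at this
  simp only [Pi.smul_apply, smul_eq_mul, mul_pow, Finset.prod_mul_distrib,
    Finset.prod_pow_eq_pow_sum, hd]
  ring

theorem stmt_10 (F : Type*) [Field F] [IsAlgClosed F] (m : ℕ) (hm : 1 ≤ m) (d : ℕ)
    (N D : MvPolynomial (Fin m) F)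
    (hN : N.IsHomogeneous d) (hD : D.IsHomogeneous d)
    (hDzero : ∀ x : Fin m → F, MvPolynomial.eval x D = 0 ↔ x = 0) :
    ∀ x y : Fin m → F, x ≠ 0 → y ≠ 0 →
      MvPolynomial.eval x N * MvPolynomial.eval y D =
        MvPolynomial.eval y N * MvPolynomial.eval x D := by
  intro x y hx hy
  by_cases hc : ∃ c : F, y = c • x
  · obtain ⟨c, rfl⟩ := hc
    rw [eval_smul_form hN, eval_smul_form hD]
    ring
  exfalso
  have hDx : MvPolynomial.eval x D ≠ 0 := mt (hDzero x).1 hx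
  have hd : 0 < d := by
    rw [Nat.pos_iff_ne_zero]
    rintro rfl
    have h := eval_smul_form hD 0 x
    rw [zero_smul, (hDzero 0).2 rfl, pow_zero, one_mul] at h
    exact hDx h.symm
  have hyx (t : F) : MvPolynomial.eval (y + t • x) D ≠ 0 := by
    intro h
    refine hc ⟨-t, ?_⟩
    rw [neg_smul]
    exact eq_neg_of_add_eq_zero_left ((hDzero _).1 h)
  have hxy (t : F) : MvPolynomial.eval (x + t • y) D ≠ 0 := by
    intro h
    have h1 := (hDzero _).1 h
    by_cases ht : t = 0
    · simp [ht] at h1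
      exact hx h1
    · refine hc ⟨-t⁻¹, ?_⟩
      rw [eq_neg_of_add_eq_zero_left h1, smul_neg, neg_smul, neg_neg, inv_smul_smul₀ ht]
  have key (t : F) (ht : t ≠ 0) :
      MvPolynomial.eval y D = t ^ d * MvPolynomial.eval x D := by
    rw [← eval_line_const D y x hyx t, ← eval_line_const D x y hxy t⁻¹, ← eval_smul_form hD,
      smul_add, smul_inv_smul₀ ht, add_comm]
  -- A nonzero value that `t ^ d` attains but that differs from `D(y) / D(x)`.
  classical
  obtain ⟨a, ha⟩ := Infinite.exists_notMem_finset
    ({0, MvPolynomial.eval y D / MvPolynomial.eval x D} : Finset F)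
  simp only [Finset.mem_insert, Finset.mem_singleton, not_or] at ha
  obtain ⟨t, ht⟩ := IsAlgClosed.exists_pow_nat_eq a hd
  have ht0 : t ≠ 0 := by
    rintro rfl
    exact ha.1 (by rw [← ht, zero_pow hd.ne'])
  exact ha.2 (by rw [key t ht0, ht, mul_div_cancel_right₀ _ hDx])
end
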